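/- arXiv:2010.14589 — 2 statements merged into one kernel-verified Lean document; each statement's English description precedes it below -/
import Mathlib

section
/- Let R be a real n×m matrix with orthonormal columns (RᵀR = Iₘ), and let X, Y be real m×p matrices such that XᵀY is invertible. Then (Iₙ − (RX)(RX)ᵀ)(RY)((RX)ᵀ(RY))⁻¹ = R · ((Iₘ − XXᵀ)Y(XᵀY)⁻¹). (This is the key matrix identity in the proof of Proposition 1, showing the matrix whose SVD yields the principal angles between span(RX) and span(RY) is R times the corresponding matrix for span(X) and span(Y).) -/
open Matrix

/-- For `R` an `n × m` real matrix with orthonormal columns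
(`Rᵀ * R = 1`) and `X, Y` real `m × p` matrices with `Xᵀ * Y` invertible,
`(Iₙ − (RX)(RX)ᵀ)(RY)((RX)ᵀ(RY))⁻¹ = R ((Iₘ − XXᵀ)Y(XᵀY)⁻¹)`. -/
theorem nested_grassmann_principal_angle_matrix_eq
    {n m p : ℕ} (R : Matrix (Fin n) (Fin m) ℝ) (hR : Rᵀ * R = 1)
    (X Y : Matrix (Fin m) (Fin p) ℝ) (hXY : IsUnit (Xᵀ * Y)) :
    (1 - (R * X) * (R * X)ᵀ) * (R * Y) * ((R * X)ᵀ * (R * Y))⁻¹ =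
      R * ((1 - X * Xᵀ) * Y * (Xᵀ * Y)⁻¹) := by
  have h : (R * X)ᵀ * (R * Y) = Xᵀ * Y := by
    rw [Matrix.transpose_mul, Matrix.mul_assoc, ← Matrix.mul_assoc Rᵀ R Y, hR, Matrix.one_mul]
  have h2 : (1 - (R * X) * (R * X)ᵀ) * (R * Y) = R * ((1 - X * Xᵀ) * Y) := by
    rw [Matrix.sub_mul, Matrix.one_mul, Matrix.mul_assoc (R * X), h, Matrix.sub_mul,
      Matrix.one_mul, Matrix.mul_sub, Matrix.mul_assoc R X, Matrix.mul_assoc X]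
  rw [h, h2, Matrix.mul_assoc R]
end

section
/- Let R be a real n×m matrix with orthonormal columns (RᵀR = Iₘ), and let X, Y be real m×p matrices such that XᵀY is invertible. Set M = (Iₘ − XXᵀ)Y(XᵀY)⁻¹ and M_R = (Iₙ − (RX)(RX)ᵀ)(RY)((RX)ᵀ(RY))⁻¹. Then M_Rᵀ M_R = Mᵀ M; in particular M_R and M have the same singular values, so the principal angles between span(RX) and span(RY) equal those between span(X) and span(Y). (Core of Proposition 1: for B = 0 the embedding ι_m is isometric.) -/
open Matrix

/-- With `M = (I − XXᵀ)Y(XᵀY)⁻¹` and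
`M_R = (I − (RX)(RX)ᵀ)(RY)((RX)ᵀ(RY))⁻¹`, one has `M_Rᵀ M_R = Mᵀ M`,
so the singular values (hence the principal angles) agree. -/
theorem nested_grassmann_gram_matrix_eq
    {n m p : ℕ} (R : Matrix (Fin n) (Fin m) ℝ) (hR : Rᵀ * R = 1)
    (X Y : Matrix (Fin m) (Fin p) ℝ) (hXY : IsUnit (Xᵀ * Y)) :
    ((1 - (R * X) * (R * X)ᵀ) * (R * Y) * ((R * X)ᵀ * (R * Y))⁻¹)ᵀ *
        ((1 - (R * X) * (R * X)ᵀ) * (R * Y) * ((R * X)ᵀ * (R * Y))⁻¹) =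
      ((1 - X * Xᵀ) * Y * (Xᵀ * Y)⁻¹)ᵀ * ((1 - X * Xᵀ) * Y * (Xᵀ * Y)⁻¹) := by
  have h1 : (R * X)ᵀ * (R * Y) = Xᵀ * Y := by
    rw [Matrix.transpose_mul, Matrix.mul_assoc, ← Matrix.mul_assoc Rᵀ, hR, Matrix.one_mul]
  have h2 : (1 - (R * X) * (R * X)ᵀ) * (R * Y) = R * ((1 - X * Xᵀ) * Y) := by
    rw [Matrix.sub_mul, Matrix.one_mul, Matrix.mul_assoc (R * X), h1, Matrix.sub_mul,
      Matrix.one_mul, Matrix.mul_sub, Matrix.mul_assoc, Matrix.mul_assoc]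
  rw [h1, h2, Matrix.mul_assoc R, Matrix.transpose_mul R, Matrix.mul_assoc _ Rᵀ,
    ← Matrix.mul_assoc Rᵀ, hR, Matrix.one_mul]
end
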